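/- arXiv:1101.1827 — 2 statements merged into one kernel-verified Lean document; each statement's English description precedes it below -/
import Mathlib

section
/- Let k, λ ∈ ℝ with λ ≤ k⁴. Suppose u ∈ C²([0,1], ℝ) satisfies k²(k²u(x)² + u'(x)²)u(x) − ((k²u(x)² + u'(x)²)u'(x))' = λ u(x)³ for all x ∈ [0,1] and u(0) = u(1) = 0. Then u is identically zero on [0,1]. -/
open Set

/-!
Write `g = k²u² + u'²`. Multiplying the equation by `u` turns it into
`(g ^ ((p - 2) / 2) u' u)' = g ^ (p / 2) - λ|u| ^ p`. Since `g ≥ k²u²` and `λ ≤ |k| ^ p`, the right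
side is nonnegative, and it vanishes only where `u' = 0`. The function `g ^ ((p - 2) / 2) u' u` is
therefore monotone; as it is zero at both endpoints, it is constant, so `u' = 0` throughout.
-/

section MonotoneEndpoints

variable {f f' : ℝ → ℝ} {a b : ℝ}

theorem eq_left_of_hasDerivAt_nonneg_of_right_le (hf : ContinuousOn f (Icc a b))
    (hf' : ∀ x ∈ Ioo a b, HasDerivAt f (f' x) x) (hf'_nonneg : ∀ x ∈ Ioo a b, 0 ≤ f' x)
    (hba : f b ≤ f a) {x : ℝ} (hx : x ∈ Icc a b) : f x = f a := by
  have hab : a ≤ b := hx.1.trans hx.2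
  have hmono : MonotoneOn f (Icc a b) := by
    rw [← interior_Icc] at hf' hf'_nonneg
    exact monotoneOn_of_hasDerivWithinAt_nonneg (convex_Icc a b) hf
      (fun y hy ↦ (hf' y hy).hasDerivWithinAt) hf'_nonneg
  exact le_antisymm ((hmono hx (right_mem_Icc.2 hab) hx.2).trans hba)
    (hmono (left_mem_Icc.2 hab) hx hx.1)

theorem deriv_eq_zero_of_hasDerivAt_nonneg_of_right_le (hf : ContinuousOn f (Icc a b))
    (hf' : ∀ x ∈ Ioo a b, HasDerivAt f (f' x) x) (hf'_nonneg : ∀ x ∈ Ioo a b, 0 ≤ f' x)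
    (hba : f b ≤ f a) {x : ℝ} (hx : x ∈ Ioo a b) : f' x = 0 := by
  have hconst : f =ᶠ[nhds x] fun _ ↦ f a := by
    filter_upwards [Icc_mem_nhds hx.1 hx.2] with y hy
    exact eq_left_of_hasDerivAt_nonneg_of_right_le hf hf' hf'_nonneg hba hy
  exact (hf' x hx).unique ((hasDerivAt_const x (f a)).congr_of_eventuallyEq hconst)

end MonotoneEndpoints

/-- The quantity `|∇ₖu|² = k²u² + u'²` at a point where `u` has value `s` and derivative `t`. -/
def perturbedGradSq (k s t : ℝ) : ℝ :=
  k ^ 2 * s ^ 2 + t ^ 2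

/-- The flux `|∇ₖu| ^ (p - 2) u'` at a point where `u` has value `s` and derivative `t`. The power
is written through `|∇ₖu|²` to avoid a square root. Where `∇ₖu = 0` the flux is `0`, as it should
be for `p > 1`, whatever value the power takes. -/
noncomputable def perturbedFlux (p k s t : ℝ) : ℝ :=
  perturbedGradSq k s t ^ ((p - 2) / 2) * t

/-- `u`, with derivative `u'`, solves the eigenvalue equation
`k²|∇ₖu| ^ (p - 2) u - (|∇ₖu| ^ (p - 2) u')' = λ|u| ^ (p - 2) u` of the perturbed `p`-Laplacian on
the open interval `(a, b)`, with `u` and its flux continuous up to the endpoints. The equation is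
solved for the derivative of the flux, so that the existence of this derivative is part of it. -/
structure IsPerturbedPLaplacianSolution (p k lam a b : ℝ) (u u' : ℝ → ℝ) : Prop where
  continuousOn : ContinuousOn u (Icc a b)
  continuousOn_flux : ContinuousOn (fun x ↦ perturbedFlux p k (u x) (u' x)) (Icc a b)
  hasDerivAt : ∀ x ∈ Ioo a b, HasDerivAt u (u' x) x
  hasDerivAt_flux : ∀ x ∈ Ioo a b, HasDerivAt (fun y ↦ perturbedFlux p k (u y) (u' y))
    (k ^ 2 * perturbedGradSq k (u x) (u' x) ^ ((p - 2) / 2) * u x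
      - lam * |u x| ^ (p - 2) * u x) x

section Pointwise

variable {p : ℝ} (k s t : ℝ)

theorem perturbedGradSq_nonneg : 0 ≤ perturbedGradSq k s t := by
  unfold perturbedGradSq
  positivity

theorem perturbedGradSq_rpow_mul_self (hp : 0 < p) :
    perturbedGradSq k s t ^ ((p - 2) / 2) * perturbedGradSq k s t
      = perturbedGradSq k s t ^ (p / 2) := by
  rw [← Real.rpow_add_one' (perturbedGradSq_nonneg k s t) (by linarith)]
  ring_nf

theorem abs_rpow_sub_two_mul_sq (hp : 0 < p) : |s| ^ (p - 2) * s ^ 2 = |s| ^ p := by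
  rw [← sq_abs, ← Real.rpow_add_natCast' (abs_nonneg s) (by push_cast; linarith), Nat.cast_ofNat,
    sub_add_cancel]

theorem perturbedGradSq_zero_right_rpow : perturbedGradSq k s 0 ^ (p / 2) = |k| ^ p * |s| ^ p := by
  have hsq : perturbedGradSq k s 0 = |k * s| ^ 2 := by
    rw [perturbedGradSq, sq_abs]
    ring
  rw [hsq, ← Real.rpow_natCast_mul (abs_nonneg _), abs_mul,
    ← Real.mul_rpow (abs_nonneg k) (abs_nonneg s)]
  congr 1
  push_cast
  ring

variable {k s t} {lam : ℝ}

theorem lam_mul_abs_rpow_le_perturbedGradSq_zero_right_rpow (hlam : lam ≤ |k| ^ p) :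
    lam * |s| ^ p ≤ perturbedGradSq k s 0 ^ (p / 2) := by
  rw [perturbedGradSq_zero_right_rpow]
  gcongr

theorem lam_mul_abs_rpow_le_perturbedGradSq_rpow (hp : 0 < p) (hlam : lam ≤ |k| ^ p) :
    lam * |s| ^ p ≤ perturbedGradSq k s t ^ (p / 2) := by
  refine (lam_mul_abs_rpow_le_perturbedGradSq_zero_right_rpow hlam).trans ?_
  refine Real.rpow_le_rpow (perturbedGradSq_nonneg k s 0) ?_ (half_pos hp).le
  simpa [perturbedGradSq] using sq_nonneg t

theorem eq_zero_of_perturbedGradSq_rpow_le (hp : 0 < p) (hlam : lam ≤ |k| ^ p)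
    (hle : perturbedGradSq k s t ^ (p / 2) ≤ lam * |s| ^ p) : t = 0 := by
  have hgrad : perturbedGradSq k s t ≤ perturbedGradSq k s 0 :=
    (Real.rpow_le_rpow_iff (perturbedGradSq_nonneg k s t) (perturbedGradSq_nonneg k s 0)
      (half_pos hp)).1 (hle.trans (lam_mul_abs_rpow_le_perturbedGradSq_zero_right_rpow hlam))
  have hsq : t ^ 2 ≤ 0 := by simpa [perturbedGradSq] using hgrad
  exact (sq_nonpos_iff t).1 hsq

end Pointwise

namespace IsPerturbedPLaplacianSolution

variable {p k lam a b : ℝ} {u u' : ℝ → ℝ}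

theorem hasDerivAt_flux_mul (hu : IsPerturbedPLaplacianSolution p k lam a b u u') (hp : 0 < p)
    {x : ℝ} (hx : x ∈ Ioo a b) :
    HasDerivAt (fun y ↦ perturbedFlux p k (u y) (u' y) * u y)
      (perturbedGradSq k (u x) (u' x) ^ (p / 2) - lam * |u x| ^ p) x := by
  convert! (hu.hasDerivAt_flux x hx).mul (hu.hasDerivAt x hx) using 1
  rw [← perturbedGradSq_rpow_mul_self k (u x) (u' x) hp, ← abs_rpow_sub_two_mul_sq (u x) hp]
  simp only [perturbedFlux]
  generalize perturbedGradSq k (u x) (u' x) ^ ((p - 2) / 2) = r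
  rw [perturbedGradSq]
  ring

theorem deriv_eq_zero (hu : IsPerturbedPLaplacianSolution p k lam a b u u') (hp : 0 < p)
    (hlam : lam ≤ |k| ^ p) (ha : u a = 0) (hb : u b = 0) {x : ℝ} (hx : x ∈ Ioo a b) :
    u' x = 0 := by
  have hderiv : perturbedGradSq k (u x) (u' x) ^ (p / 2) - lam * |u x| ^ p = 0 :=
    deriv_eq_zero_of_hasDerivAt_nonneg_of_right_le (hu.continuousOn_flux.mul hu.continuousOn)
      (fun _ hy ↦ hu.hasDerivAt_flux_mul hp hy)
      (fun _ _ ↦ sub_nonneg.2 (lam_mul_abs_rpow_le_perturbedGradSq_rpow hp hlam))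
      (by simp [ha, hb]) hx
  exact eq_zero_of_perturbedGradSq_rpow_le hp hlam (sub_eq_zero.1 hderiv).le

end IsPerturbedPLaplacianSolution

theorem perturbedFlux_four (k s t : ℝ) :
    perturbedFlux 4 k s t = (k ^ 2 * s ^ 2 + t ^ 2) * t := by
  norm_num [perturbedFlux, perturbedGradSq]

theorem IsPerturbedPLaplacianSolution.of_contDiff_two {k lam a b : ℝ} {u : ℝ → ℝ}
    (hu : ContDiff ℝ 2 u)
    (heq : ∀ x ∈ Ioo a b,
      k ^ 2 * (k ^ 2 * (u x) ^ 2 + (deriv u x) ^ 2) * u x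
        - deriv (fun y : ℝ => (k ^ 2 * (u y) ^ 2 + (deriv u y) ^ 2) * deriv u y) x
        = lam * (u x) ^ 3) :
    IsPerturbedPLaplacianSolution 4 k lam a b u (deriv u) := by
  have hu₁ : Differentiable ℝ u := hu.differentiable two_ne_zero
  have hu₂ : Differentiable ℝ (deriv u) := hu.differentiable_deriv_two
  have hflux : Differentiable ℝ fun x ↦ (k ^ 2 * (u x) ^ 2 + (deriv u x) ^ 2) * deriv u x :=
    (((hu₁.pow 2).const_mul (k ^ 2)).add (hu₂.pow 2)).mul hu₂
  refine ⟨hu₁.continuous.continuousOn, ?_, fun x _ ↦ (hu₁ x).hasDerivAt, fun x hx ↦ ?_⟩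
  · simpa only [perturbedFlux_four] using hflux.continuous.continuousOn
  · simp only [perturbedFlux_four]
    convert! (hflux x).hasDerivAt using 1
    have hhalf : ((4 : ℝ) - 2) / 2 = 1 := by norm_num
    have habs : |u x| ^ ((4 : ℝ) - 2) = u x ^ 2 := by norm_num
    rw [hhalf, Real.rpow_one, habs, perturbedGradSq]
    linear_combination heq x hx

theorem stmt_10_general {p k lam a b : ℝ} (hp : 1 < p) (hlam : lam ≤ |k| ^ p) {u u' : ℝ → ℝ}
    (hu : IsPerturbedPLaplacianSolution p k lam a b u u') (ha : u a = 0) (hb : u b = 0) :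
    ∀ x ∈ Icc a b, u x = 0 := by
  have hu' : ∀ x ∈ Ioo a b, u' x = 0 := fun _ ↦ hu.deriv_eq_zero (one_pos.trans hp) hlam ha hb
  intro x hx
  rw [← ha]
  exact eq_left_of_hasDerivAt_nonneg_of_right_le hu.continuousOn hu.hasDerivAt
    (fun y hy ↦ (hu' y hy).ge) (hb.trans ha.symm).le hx

/-- If `λ ≤ k⁴` and `u ∈ C²([0,1])` solves the Dirichlet problem
`k²(k²u² + u'²)u − ((k²u² + u'²)u')' = λu³` on `[0,1]` with `u(0) = u(1) = 0`,
then `u ≡ 0` on `[0,1]`. -/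
theorem stmt_10 (k lam : ℝ) (h : lam ≤ k ^ 4) (u : ℝ → ℝ) (hu : ContDiff ℝ 2 u)
    (heq : ∀ x ∈ Icc (0:ℝ) 1,
      k ^ 2 * (k ^ 2 * (u x) ^ 2 + (deriv u x) ^ 2) * u x
        - deriv (fun y : ℝ => (k ^ 2 * (u y) ^ 2 + (deriv u y) ^ 2) * deriv u y) x
        = lam * (u x) ^ 3)
    (h0 : u 0 = 0) (h1 : u 1 = 0) :
    ∀ x ∈ Icc (0:ℝ) 1, u x = 0 := by
  exact stmt_10_general (by norm_num) (by simpa [(by decide : Even 4).pow_abs] using h)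
    (.of_contDiff_two hu fun x hx ↦ heq x (Ioo_subset_Icc_self hx)) h0 h1
end

section
/- For real k, λ with k⁴ < λ, define π₄(λ, k) := 2 ∫₀^{(3/(λ−k⁴))^{1/4}} [−(k²/3)s² + √(k⁴s⁴/9 + 1 − ((λ−k⁴)/3)s⁴)]^{−1/2} ds. Then for every fixed λ > 0, π₄(λ, k) → +∞ as k → λ^{1/4} from the left (with k ∈ [0, λ^{1/4})). -/
open MeasureTheory Set Filter

/-!
Let `S = (3 / (λ - k⁴))^{1/4}` be the upper limit. The integrand is `q ^ (-1/2)`, where `0 < q ≤ 1`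
on `(0, S)` because `√(x² + y) ≤ x + √y`. So the integrand is at least `1` and `π₄(λ, k) ≥ 2 S`,
which tends to infinity. This bound requires integrability at `S`, where `q` vanishes:
rationalizing, `q · ((k²/3) s² + √⋯) = 1 - (s/S)⁴ ≥ 1 - s/S`, so `q` is bounded below by
a multiple of `S - s`, and the integrand is dominated by a multiple of `(S - s)^{-1/2}`.
-/

section SqrtSqAdd

variable {x y : ℝ}

lemma sqrt_sq_add_sub_le_sqrt (hx : 0 ≤ x) (y : ℝ) : √(x ^ 2 + y) - x ≤ √y := by
  rw [sub_le_iff_le_add, Real.sqrt_le_iff]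
  have hy : y ≤ √y ^ 2 := (Real.sqrt_le_iff.1 le_rfl).2
  exact ⟨by positivity, by nlinarith [mul_nonneg hx (Real.sqrt_nonneg y)]⟩

lemma le_sqrt_sq_add_sub_mul (hx : 0 ≤ x) (hy : 0 ≤ y) :
    y ≤ (√(x ^ 2 + y) - x) * (2 * x + √y) := by
  have hle : x ≤ √(x ^ 2 + y) := Real.le_sqrt_of_sq_le (by linarith)
  calc
    y = √(x ^ 2 + y) ^ 2 - x ^ 2 := by rw [Real.sq_sqrt (by positivity)]; ring
    _ = (√(x ^ 2 + y) - x) * (√(x ^ 2 + y) + x) := by ring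
    _ ≤ (√(x ^ 2 + y) - x) * (2 * x + √y) :=
      mul_le_mul_of_nonneg_left (by linarith [sqrt_sq_add_sub_le_sqrt hx y]) (sub_nonneg.2 hle)

end SqrtSqAdd

section RpowIntegral

variable {f : ℝ → ℝ} {a b c r : ℝ}

lemma intervalIntegrable_sub_left_rpow (hr : -1 < r) :
    IntervalIntegrable (fun s ↦ (b - s) ^ r) volume a b := by
  simpa using (intervalIntegral.intervalIntegrable_rpow' (a := b - a) (b := 0) hr).comp_sub_left b

lemma intervalIntegrable_rpow_of_mul_sub_le (hab : a ≤ b) (hc : 0 < c) (hr : -1 < r) (hr₀ : r ≤ 0)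
    (hf : AEMeasurable f (volume.restrict (Ioo a b)))
    (hlow : ∀ s ∈ Ioo a b, c * (b - s) ≤ f s) :
    IntervalIntegrable (fun s ↦ f s ^ r) volume a b := by
  have hdom : IntervalIntegrable (fun s ↦ c ^ r * (b - s) ^ r) volume a b :=
    (intervalIntegrable_sub_left_rpow hr).const_mul _
  rw [intervalIntegrable_iff_integrableOn_Ioo_of_le hab] at hdom ⊢
  refine Integrable.mono' hdom (hf.pow_const r).aestronglyMeasurable ?_
  filter_upwards [ae_restrict_mem measurableSet_Ioo] with s hs
  have hsb : 0 < b - s := sub_pos.2 hs.2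
  have hfs : 0 < f s := (mul_pos hc hsb).trans_le (hlow s hs)
  rw [Real.norm_of_nonneg (Real.rpow_nonneg hfs.le r), ← Real.mul_rpow hc.le hsb.le]
  exact Real.rpow_le_rpow_of_nonpos (mul_pos hc hsb) (hlow s hs) hr₀

lemma sub_le_integral_rpow_of_le_one (hab : a ≤ b) (hr : r ≤ 0)
    (hint : IntervalIntegrable (fun s ↦ f s ^ r) volume a b)
    (hpos : ∀ s ∈ Ioo a b, 0 < f s) (hle : ∀ s ∈ Ioo a b, f s ≤ 1) :
    b - a ≤ ∫ s in a..b, f s ^ r := by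
  calc
    b - a = ∫ _ in a..b, (1 : ℝ) := by simp
    -- Only the open interval: if `f` vanishes at an endpoint, `0 ^ r = 0 < 1` there for `r < 0`.
    _ ≤ ∫ s in a..b, f s ^ r :=
      intervalIntegral.integral_mono_on_of_le_Ioo hab (by simp) hint fun s hs ↦
        Real.one_le_rpow_of_pos_of_le_one_of_nonpos (hpos s hs) (hle s hs) hr

end RpowIntegral

section HalfPeriod

/-- The value of `u'²` where `u = s`, along the solution with `u' = 1` at `u = 0`: for `k⁴ < λ` and
`0 ≤ s ≤ amplitude lam k`, the nonnegative root `q` of the first integral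
`3 q² + 2 k² s² q + (λ - k⁴) s⁴ = 3` of the equation. -/
noncomputable def slopeSq (lam k s : ℝ) : ℝ :=
  -(k ^ 2 / 3) * s ^ 2 + √(k ^ 4 * s ^ 4 / 9 + 1 - (lam - k ^ 4) / 3 * s ^ 4)

/-- The maximum of `u` along the solution in `slopeSq`: the positive zero of `slopeSq lam k`. It is
meant for `k ^ 4 < lam`. -/
noncomputable def amplitude (lam k : ℝ) : ℝ :=
  (3 / (lam - k ^ 4)) ^ ((1 : ℝ) / 4)

variable {lam k s : ℝ}

lemma rpow_one_div_four_pow_four {x : ℝ} (hx : 0 ≤ x) : (x ^ ((1 : ℝ) / 4)) ^ 4 = x := by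
  simpa using Real.rpow_inv_natCast_pow hx four_ne_zero

lemma amplitude_pos (hk : k ^ 4 < lam) : 0 < amplitude lam k :=
  Real.rpow_pos_of_pos (div_pos three_pos (sub_pos.2 hk)) _

lemma amplitude_pow_four (hk : k ^ 4 < lam) : amplitude lam k ^ 4 = 3 / (lam - k ^ 4) :=
  rpow_one_div_four_pow_four (div_pos three_pos (sub_pos.2 hk)).le

lemma measurable_slopeSq (lam k : ℝ) : Measurable (slopeSq lam k) := by
  unfold slopeSq
  fun_prop

lemma slopeSq_eq_sqrt_sub (hk : k ^ 4 < lam) (s : ℝ) :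
    slopeSq lam k s =
      √((k ^ 2 / 3 * s ^ 2) ^ 2 + (1 - (s / amplitude lam k) ^ 4)) - k ^ 2 / 3 * s ^ 2 := by
  rw [slopeSq, div_pow, amplitude_pow_four hk, div_div_eq_mul_div]
  ring_nf

lemma slopeSq_le_one (hk : k ^ 4 < lam) (s : ℝ) : slopeSq lam k s ≤ 1 := by
  rw [slopeSq_eq_sqrt_sub hk]
  refine (sqrt_sq_add_sub_le_sqrt (by positivity) _).trans (Real.sqrt_le_one.2 ?_)
  linarith [show 0 ≤ (s / amplitude lam k) ^ 4 by positivity]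

lemma one_sub_div_amplitude_le_slopeSq_mul (hk : k ^ 4 < lam)
    (hs : s ∈ Icc 0 (amplitude lam k)) :
    1 - s / amplitude lam k ≤ slopeSq lam k s * (2 * (k ^ 2 / 3 * amplitude lam k ^ 2) + 1) := by
  have hA := amplitude_pos hk
  have hratio₀ : 0 ≤ s / amplitude lam k := div_nonneg hs.1 hA.le
  have hratio₁ : s / amplitude lam k ≤ 1 := (div_le_one hA).2 hs.2
  set x := k ^ 2 / 3 * s ^ 2
  set y := 1 - (s / amplitude lam k) ^ 4
  have hx₀ : 0 ≤ x := by positivity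
  have hxA : x ≤ k ^ 2 / 3 * amplitude lam k ^ 2 :=
    mul_le_mul_of_nonneg_left (pow_le_pow_left₀ hs.1 hs.2 2) (by positivity)
  have hy₀ : 0 ≤ y := sub_nonneg.2 (pow_le_one₀ hratio₀ hratio₁)
  have hy₁ : √y ≤ 1 := Real.sqrt_le_one.2 (sub_le_self _ (by positivity))
  have hslope : slopeSq lam k s = √(x ^ 2 + y) - x := slopeSq_eq_sqrt_sub hk s
  have hslope₀ : 0 ≤ slopeSq lam k s := by
    rw [hslope, sub_nonneg]
    exact Real.le_sqrt_of_sq_le (by linarith)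
  calc
    1 - s / amplitude lam k ≤ y :=
      sub_le_sub_left (pow_le_of_le_one hratio₀ hratio₁ four_ne_zero) 1
    _ ≤ slopeSq lam k s * (2 * x + √y) := hslope ▸ le_sqrt_sq_add_sub_mul hx₀ hy₀
    _ ≤ slopeSq lam k s * (2 * (k ^ 2 / 3 * amplitude lam k ^ 2) + 1) :=
      mul_le_mul_of_nonneg_left (by linarith) hslope₀

lemma mul_amplitude_sub_le_slopeSq (hk : k ^ 4 < lam) (hs : s ∈ Icc 0 (amplitude lam k)) :
    (amplitude lam k * (2 * (k ^ 2 / 3 * amplitude lam k ^ 2) + 1))⁻¹ * (amplitude lam k - s) ≤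
      slopeSq lam k s := by
  have hA := amplitude_pos hk
  rw [inv_mul_le_iff₀ (by positivity)]
  calc
    amplitude lam k - s = amplitude lam k * (1 - s / amplitude lam k) := by field_simp
    _ ≤ amplitude lam k *
        (slopeSq lam k s * (2 * (k ^ 2 / 3 * amplitude lam k ^ 2) + 1)) :=
      mul_le_mul_of_nonneg_left (one_sub_div_amplitude_le_slopeSq_mul hk hs) hA.le
    _ = _ := by ring

lemma amplitude_le_integral_slopeSq_rpow {r : ℝ} (hr : -1 < r) (hr₀ : r ≤ 0) (hk : k ^ 4 < lam) :
    amplitude lam k ≤ ∫ s in (0 : ℝ)..amplitude lam k, slopeSq lam k s ^ r := by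
  have hA := amplitude_pos hk
  set c := (amplitude lam k * (2 * (k ^ 2 / 3 * amplitude lam k ^ 2) + 1))⁻¹
  have hc : 0 < c := by positivity
  have hlow : ∀ s ∈ Ioo 0 (amplitude lam k), c * (amplitude lam k - s) ≤ slopeSq lam k s :=
    fun s hs ↦ mul_amplitude_sub_le_slopeSq hk (Ioo_subset_Icc_self hs)
  have hpos : ∀ s ∈ Ioo 0 (amplitude lam k), 0 < slopeSq lam k s :=
    fun s hs ↦ (mul_pos hc (sub_pos.2 hs.2)).trans_le (hlow s hs)
  have hint := intervalIntegrable_rpow_of_mul_sub_le hA.le hc hr hr₀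
    (measurable_slopeSq lam k).aemeasurable hlow
  simpa using sub_le_integral_rpow_of_le_one hA.le hr₀ hint hpos fun s _ ↦ slopeSq_le_one hk s

open Topology in
lemma tendsto_amplitude_atTop {k₀ : ℝ} (hk₀ : k₀ ^ 4 = lam) :
    Tendsto (amplitude lam) (𝓝[{k | k ^ 4 < lam}] k₀) atTop := by
  have hgap : Tendsto (fun k ↦ lam - k ^ 4) (𝓝[{k | k ^ 4 < lam}] k₀) (𝓝[>] 0) := by
    have hcont : Continuous fun k : ℝ ↦ lam - k ^ 4 := by fun_prop
    refine tendsto_nhdsWithin_iff.2 ⟨?_, ?_⟩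
    · exact (hcont.tendsto' k₀ 0 (by simp [hk₀])).mono_left nhdsWithin_le_nhds
    · filter_upwards [self_mem_nhdsWithin] with k hk using sub_pos.2 hk
  exact (tendsto_rpow_atTop (by norm_num)).comp
    ((tendsto_inv_nhdsGT_zero.comp hgap).const_mul_atTop three_pos)

end HalfPeriod

/-- For every fixed `λ > 0`, the half-period `π₄(λ, k)` tends to `+∞`
as `k → λ^{1/4}` from the left along `[0, λ^{1/4})`. -/
theorem stmt_18 (pi4 : ℝ → ℝ → ℝ)
    (hpi4 : ∀ lam k : ℝ, k ^ 4 < lam → pi4 lam k =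
      2 * ∫ s in (0:ℝ)..((3 / (lam - k ^ 4)) ^ ((1:ℝ)/4)),
        (-(k ^ 2 / 3) * s ^ 2 +
          Real.sqrt (k ^ 4 * s ^ 4 / 9 + 1 - (lam - k ^ 4) / 3 * s ^ 4)) ^ (-(1:ℝ)/2)) :
    ∀ lam : ℝ, 0 < lam →
      Tendsto (fun k => pi4 lam k)
        (nhdsWithin (lam ^ ((1:ℝ)/4)) (Ico (0:ℝ) (lam ^ ((1:ℝ)/4)))) atTop := by
  intro lam hlam
  have hroot : (lam ^ ((1 : ℝ) / 4)) ^ 4 = lam := rpow_one_div_four_pow_four hlam.le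
  have hsub : Ico 0 (lam ^ ((1 : ℝ) / 4)) ⊆ {k | k ^ 4 < lam} := fun k hk ↦
    (pow_lt_pow_left₀ hk.2 hk.1 four_ne_zero).trans_eq hroot
  have hamp := (tendsto_amplitude_atTop hroot).mono_left (nhdsWithin_mono _ hsub)
  refine tendsto_atTop_mono' _ ?_ (hamp.const_mul_atTop two_pos)
  filter_upwards [self_mem_nhdsWithin] with k hk
  rw [hpi4 lam k (hsub hk)]
  exact mul_le_mul_of_nonneg_left
    (amplitude_le_integral_slopeSq_rpow (by norm_num) (by norm_num) (hsub hk)) two_pos.le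
end
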